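/- Define the cost of a finite list L of pairs of real numbers by C(L) = Σ over all ordered index pairs i < k of (first component of L_k)·(second component of L_i). Let a = (n_a, D_a) and b = (n_b, D_b) be pairs with n_a, n_b > 0, and suppose D_a/n_a < D_b/n_b. Then for any lists P and Q, C(P ++ [a, b] ++ Q) < C(P ++ [b, a] ++ Q). -/

import Mathlib

open Finset in
/-- Order-dependent part of the total response time of a block schedule:
`C(L) = Σ_{i<k} (L_k).1 · (L_i).2`. -/
noncomputable def pairCost (L : List (ℝ × ℝ)) : ℝ :=
  ∑ k ∈ Finset.range L.length, ∑ i ∈ Finset.range k,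
    (L.getD k (0, 0)).1 * (L.getD i (0, 0)).2

/-! Exchanging two adjacent blocks `A`, `B` of a schedule affects only the products that pair an
entry of `A` with an entry of `B`: these contribute `n(B) · D(A)` when `A` comes first and
`n(A) · D(B)` when `B` does, where `n` and `D` sum the first and second components. Comparing the
two contributions amounts to comparing the weights `D / n`. -/

theorem sum_range_length_getD {α M : Type*} [AddCommMonoid M] (f : α → M) (L : List α) (d : α) :
    ∑ i ∈ Finset.range L.length, f (L.getD i d) = (L.map f).sum := by
  rw [Finset.sum_range, ← Fin.sum_univ_fun_getElem]
  simp only [Fin.is_lt, List.getD_eq_getElem]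

theorem pairCost_nil : pairCost [] = 0 := rfl

theorem pairCost_cons (x : ℝ × ℝ) (L : List (ℝ × ℝ)) :
    pairCost (x :: L) = (L.map Prod.fst).sum * x.2 + pairCost L := by
  simp only [pairCost, List.length_cons, Finset.sum_range_succ', List.getD_cons_succ,
    List.getD_cons_zero, Finset.sum_range_zero, add_zero, Finset.sum_add_distrib]
  rw [← Finset.sum_mul, sum_range_length_getD, add_comm]

theorem pairCost_append (L M : List (ℝ × ℝ)) :
    pairCost (L ++ M) =
      pairCost L + pairCost M + (M.map Prod.fst).sum * (L.map Prod.snd).sum := by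
  induction L with
  | nil => simp [pairCost_nil]
  | cons x L ih =>
    simp only [List.cons_append, pairCost_cons, ih, List.map_append, List.sum_append,
      List.map_cons, List.sum_cons]
    ring

theorem pairCost_swap_sub (P A B Q : List (ℝ × ℝ)) :
    pairCost (P ++ (B ++ A) ++ Q) - pairCost (P ++ (A ++ B) ++ Q) =
      (A.map Prod.fst).sum * (B.map Prod.snd).sum -
        (B.map Prod.fst).sum * (A.map Prod.snd).sum := by
  simp only [pairCost_append, List.map_append, List.sum_append]
  ring

theorem pairCost_lt_pairCost_swap_iff (P A B Q : List (ℝ × ℝ)) :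
    pairCost (P ++ (A ++ B) ++ Q) < pairCost (P ++ (B ++ A) ++ Q) ↔
      (B.map Prod.fst).sum * (A.map Prod.snd).sum <
        (A.map Prod.fst).sum * (B.map Prod.snd).sum := by
  rw [← sub_pos, pairCost_swap_sub, sub_pos]

/-- Placing a block of strictly smaller weight `D_a/n_a` before an adjacent block of
strictly larger weight `D_b/n_b` strictly decreases the cost. -/
theorem stmt_6 (na Da nb Db : ℝ) (hna : 0 < na) (hnb : 0 < nb)
    (hw : Da / na < Db / nb) (P Q : List (ℝ × ℝ)) :
    pairCost (P ++ [(na, Da), (nb, Db)] ++ Q) < pairCost (P ++ [(nb, Db), (na, Da)] ++ Q) := by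
  have cross_lt : nb * Da < na * Db := by
    simpa only [mul_comm] using (div_lt_div_iff₀ hna hnb).1 hw
  exact (pairCost_lt_pairCost_swap_iff P [(na, Da)] [(nb, Db)] Q).2 (by simpa using cross_lt)
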